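/- Let d ≥ 1 and s ∈ (0,1). Then there exists a constant C = C(d,s) > 0 such that for every Schwartz function u : ℝ^d → ℂ one has the identity ∫_{ℝ^d}∫_{ℝ^d} |u(x)−u(y)|²/‖x−y‖^{d+2s} dx dy = C · ∫_{ℝ^d} ‖ξ‖^{2s} |(𝓕u)(ξ)|² dξ. -/

import Mathlib

open MeasureTheory
open scoped RealInnerProductSpace

/-- Fourier transform `(𝓕u)(ξ) = ∫ e^{-2πi x·ξ} u(x) dx`. -/
noncomputable def FT {d : ℕ} (u : EuclideanSpace ℝ (Fin d) → ℂ)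
    (ξ : EuclideanSpace ℝ (Fin d)) : ℂ :=
  ∫ x : EuclideanSpace ℝ (Fin d),
    Complex.exp ((-(2 * Real.pi * ⟪x, ξ⟫) : ℝ) * Complex.I) * u x

/-!
Substituting `y = x - h` and applying Plancherel to `u - u (· - h)`, whose Fourier transform is
`(1 - e^{-2πi⟪h, ξ⟫}) 𝓕 u ξ`, Tonelli's theorem turns the double integral into
`∫ σ(ξ) ‖𝓕 u ξ‖²`, where `σ(ξ) = ∫ (2 sin (π⟪h, ξ⟫))² / ‖h‖^(d + 2s) dh`. The function `σ` is
rotation invariant and homogeneous of degree `2s`, so `σ(ξ) = σ(e) ‖ξ‖^(2s)` for any unit vector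
`e`, and `0 < σ(e) < ∞` when `0 < s < 1`.
-/

open Module (finrank)
open Real (sin)
open scoped ENNReal FourierTransform Real SchwartzMap

section IteratedIntegral

variable {α β : Type*} [MeasurableSpace α] [MeasurableSpace β] {μ : Measure α} {ν : Measure β}
  [SFinite ν]

lemma integral_integral_eq_toReal_lintegral_lintegral {f : α → β → ℝ}
    (hf : Measurable (Function.uncurry f)) (hf_nonneg : ∀ a b, 0 ≤ f a b)
    (hf_ne_top : ∫⁻ a, ∫⁻ b, ENNReal.ofReal (f a b) ∂ν ∂μ ≠ ∞) :
    ∫ a, ∫ b, f a b ∂ν ∂μ = (∫⁻ a, ∫⁻ b, ENNReal.ofReal (f a b) ∂ν ∂μ).toReal := by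
  have inner_eq (a : α) : ∫ b, f a b ∂ν = (∫⁻ b, ENNReal.ofReal (f a b) ∂ν).toReal :=
    integral_eq_lintegral_of_nonneg_ae (.of_forall (hf_nonneg a))
      hf.of_uncurry_left.aestronglyMeasurable
  have inner_measurable : Measurable fun a ↦ ∫⁻ b, ENNReal.ofReal (f a b) ∂ν :=
    hf.ennreal_ofReal.lintegral_prod_right
  simp_rw [inner_eq]
  exact integral_toReal inner_measurable.aemeasurable (ae_lt_top inner_measurable hf_ne_top)

end IteratedIntegral

section LevyIntegrability

variable {s : ℝ}

lemma integrableOn_min_one_sq_mul_rpow (hs : s ∈ Set.Ioo (0 : ℝ) 1) :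
    IntegrableOn (fun r : ℝ ↦ min 1 (r ^ 2) * r ^ (-1 - 2 * s)) (Set.Ioi 0) := by
  obtain ⟨hs_pos, hs_lt_one⟩ := hs
  rw [← Set.Ioo_union_Ici_eq_Ioi zero_lt_one, integrableOn_union]
  constructor
  · have near_zero : IntegrableOn (fun r : ℝ ↦ r ^ (1 - 2 * s)) (Set.Ioo 0 1) :=
      (intervalIntegral.integrableOn_Ioo_rpow_iff zero_lt_one).2 (by linarith)
    refine near_zero.congr_fun (fun r ⟨hr_pos, hr_lt_one⟩ ↦ ?_) measurableSet_Ioo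
    dsimp only
    rw [min_eq_right (pow_le_one₀ hr_pos.le hr_lt_one.le), ← Real.rpow_two, ← Real.rpow_add hr_pos]
    ring_nf
  · have near_infinity : IntegrableOn (fun r : ℝ ↦ r ^ (-1 - 2 * s)) (Set.Ici 1) := by
      rw [integrableOn_Ici_iff_integrableOn_Ioi, integrableOn_Ioi_rpow_iff zero_lt_one]
      linarith
    refine near_infinity.congr_fun (fun r (hr : 1 ≤ r) ↦ ?_) measurableSet_Ici
    dsimp only
    rw [min_eq_left (one_le_pow₀ hr), one_mul]

lemma integrable_min_one_norm_sq_div_norm_rpow {E : Type*} [NormedAddCommGroup E]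
    [NormedSpace ℝ E] [FiniteDimensional ℝ E] [Nontrivial E] [MeasurableSpace E] [BorelSpace E]
    (μ : Measure E) [μ.IsAddHaarMeasure] (hs : s ∈ Set.Ioo (0 : ℝ) 1) :
    Integrable (fun h : E ↦ min 1 (‖h‖ ^ 2) / ‖h‖ ^ (finrank ℝ E + 2 * s)) μ := by
  rw [integrable_fun_norm_addHaar μ (f := fun r ↦ min 1 (r ^ 2) / r ^ (finrank ℝ E + 2 * s))]
  refine (integrableOn_min_one_sq_mul_rpow hs).congr_fun (fun r (hr : 0 < r) ↦ ?_) measurableSet_Ioi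
  have radial_density :
      r ^ (-1 - 2 * s) = r ^ (finrank ℝ E - 1) / r ^ (finrank ℝ E + 2 * s) := by
    rw [← Real.rpow_natCast, ← Real.rpow_sub hr, Nat.cast_pred Module.finrank_pos]
    ring_nf
  dsimp only
  rw [radial_density, smul_eq_mul]
  ring

end LevyIntegrability

section Symbol

lemma two_mul_sin_pi_mul_inner_sq_le {V : Type*} [NormedAddCommGroup V]
    [InnerProductSpace ℝ V] (h ξ : V) :
    (2 * sin (π * ⟪h, ξ⟫)) ^ 2 ≤ 4 * (1 + (π * ‖ξ‖) ^ 2) * min 1 (‖h‖ ^ 2) := by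
  have sin_sq_le_norm_sq : sin (π * ⟪h, ξ⟫) ^ 2 ≤ (π * ‖ξ‖) ^ 2 * ‖h‖ ^ 2 :=
    calc sin (π * ⟪h, ξ⟫) ^ 2 ≤ π ^ 2 * |⟪h, ξ⟫| ^ 2 := by
          rw [sq_abs, ← mul_pow]
          exact Real.sin_sq_le_sq
      _ ≤ π ^ 2 * (‖h‖ * ‖ξ‖) ^ 2 := by gcongr; exact abs_real_inner_le_norm h ξ
      _ = (π * ‖ξ‖) ^ 2 * ‖h‖ ^ 2 := by ring
  have sin_sq_le_one : sin (π * ⟪h, ξ⟫) ^ 2 ≤ 1 := Real.sin_sq_le_one _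
  rw [mul_min_of_nonneg _ _ (by positivity), mul_pow]
  refine le_min ?_ ?_
  · linarith [sq_nonneg (π * ‖ξ‖)]
  · linarith [sq_nonneg ‖h‖]

variable {V : Type*} [NormedAddCommGroup V] [InnerProductSpace ℝ V] [FiniteDimensional ℝ V]
  [MeasurableSpace V] [BorelSpace V] {s : ℝ}

/-- The symbol `∫ |e^{-2πi⟪h, ξ⟫} - 1|² / ‖h‖^(d + 2s) dh` of the Gagliardo form, up to a constant
that of the fractional Laplacian. The numerator is written as `(2 sin (π⟪h, ξ⟫))²`, and the integral
is extended-valued so that homogeneity and Tonelli's theorem need no integrability. -/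
noncomputable def gagliardoSymbol (s : ℝ) (ξ : V) : ℝ≥0∞ :=
  ∫⁻ h : V, ENNReal.ofReal ((2 * sin (π * ⟪h, ξ⟫)) ^ 2 / ‖h‖ ^ (finrank ℝ V + 2 * s))

@[simp]
lemma gagliardoSymbol_zero : gagliardoSymbol s (0 : V) = 0 := by
  simp [gagliardoSymbol]

lemma gagliardoSymbol_map (R : V ≃ₗᵢ[ℝ] V) (ξ : V) :
    gagliardoSymbol s (R ξ) = gagliardoSymbol s ξ := by
  unfold gagliardoSymbol
  rw [← R.measurePreserving.lintegral_comp_emb R.toHomeomorph.measurableEmbedding]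
  simp only [R.inner_map_map, R.norm_map]

lemma gagliardoSymbol_eq_of_norm_eq {ξ η : V} (h : ‖ξ‖ = ‖η‖) :
    gagliardoSymbol s ξ = gagliardoSymbol s η := by
  rw [← Submodule.reflection_sub h, gagliardoSymbol_map]

lemma gagliardoSymbol_smul {r : ℝ} (hr : 0 < r) (ξ : V) :
    gagliardoSymbol s (r • ξ) = ENNReal.ofReal (r ^ (2 * s)) * gagliardoSymbol s ξ := by
  set p : ℝ := finrank ℝ V + 2 * s with hp
  set f : V → ℝ≥0∞ := fun h ↦ ENNReal.ofReal ((2 * sin (π * ⟪h, ξ⟫)) ^ 2 / ‖h‖ ^ p) with hf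
  have integrand_eq (h : V) :
      ENNReal.ofReal ((2 * sin (π * ⟪h, r • ξ⟫)) ^ 2 / ‖h‖ ^ p)
        = ENNReal.ofReal (r ^ p) * f (r • h) := by
    have hrp : r ^ p ≠ 0 := by positivity
    rw [hf, ← ENNReal.ofReal_mul (by positivity), norm_smul, Real.norm_of_nonneg hr.le,
      Real.mul_rpow hr.le (norm_nonneg h), real_inner_smul_right, real_inner_smul_left]
    field_simp
  have scaling : r ^ p * |(r ^ finrank ℝ V)⁻¹| = r ^ (2 * s) := by
    rw [abs_of_pos (by positivity), hp, Real.rpow_add hr, Real.rpow_natCast]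
    field_simp
  calc gagliardoSymbol s (r • ξ) = ENNReal.ofReal (r ^ p) * ∫⁻ h, f (r • h) := by
        simp_rw [gagliardoSymbol, ← hp, integrand_eq]
        exact lintegral_const_mul' _ _ ENNReal.ofReal_ne_top
    _ = ENNReal.ofReal (r ^ p) * (ENNReal.ofReal |(r ^ finrank ℝ V)⁻¹| * ∫⁻ h, f h) := by
        rw [← lintegral_map (by fun_prop : Measurable f) (measurable_const_smul r),
          Measure.map_addHaar_smul _ hr.ne', lintegral_smul_measure, smul_eq_mul]
    _ = ENNReal.ofReal (r ^ (2 * s)) * gagliardoSymbol s ξ := by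
        rw [← mul_assoc, ← ENNReal.ofReal_mul (by positivity), scaling, gagliardoSymbol]

lemma gagliardoSymbol_eq_mul_norm_rpow (hs : s ≠ 0) {e : V} (he : ‖e‖ = 1) (ξ : V) :
    gagliardoSymbol s ξ = gagliardoSymbol s e * ENNReal.ofReal (‖ξ‖ ^ (2 * s)) := by
  rcases eq_or_ne ξ 0 with rfl | hξ
  · simp [Real.zero_rpow, hs]
  · rw [mul_comm, ← gagliardoSymbol_smul (norm_pos_iff.2 hξ)]
    exact gagliardoSymbol_eq_of_norm_eq (by simp [norm_smul, he])

lemma gagliardoSymbol_lt_top [Nontrivial V] (hs : s ∈ Set.Ioo (0 : ℝ) 1) (ξ : V) :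
    gagliardoSymbol s ξ < ∞ := by
  refine lt_of_le_of_lt (lintegral_mono fun h ↦ ENNReal.ofReal_le_ofReal ?_)
    ((integrable_min_one_norm_sq_div_norm_rpow volume hs).const_mul
      (4 * (1 + (π * ‖ξ‖) ^ 2))).lintegral_lt_top
  rw [← mul_div_assoc]
  gcongr
  exact two_mul_sin_pi_mul_inner_sq_le h ξ

lemma gagliardoSymbol_pos {ξ : V} (hξ : ξ ≠ 0) : 0 < gagliardoSymbol s ξ := by
  set slab : Set V := (fun h ↦ ⟪h, ξ⟫) ⁻¹' Set.Ioo 0 1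
  have slab_open : IsOpen slab := isOpen_Ioo.preimage (by fun_prop)
  have slab_nonempty : slab.Nonempty := by
    refine ⟨(2 * ‖ξ‖ ^ 2)⁻¹ • ξ, ?_⟩
    have inner_eq_half : ⟪(2 * ‖ξ‖ ^ 2)⁻¹ • ξ, ξ⟫ = 1 / 2 := by
      rw [real_inner_smul_left, real_inner_self_eq_norm_sq]
      field_simp [norm_ne_zero_iff.2 hξ]
    rw [Set.mem_preimage, inner_eq_half]
    norm_num
  rw [gagliardoSymbol, lintegral_pos_iff_support (by fun_prop)]
  refine (slab_open.measure_pos volume slab_nonempty).trans_le (measure_mono ?_)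
  rintro h ⟨inner_pos, inner_lt_one⟩
  have h_norm_pos : 0 < ‖h‖ := norm_pos_iff.2 (by rintro rfl; simp at inner_pos)
  have sin_pos : 0 < sin (π * ⟪h, ξ⟫) :=
    Real.sin_pos_of_pos_of_lt_pi (by positivity) (by nlinarith [Real.pi_pos])
  exact (ENNReal.ofReal_pos.2 (by positivity)).ne'

end Symbol

section SchwartzIntegrability

variable {E F : Type*} [NormedAddCommGroup E] [NormedSpace ℝ E] [NormedAddCommGroup F]
  [NormedSpace ℝ F]

lemma integrable_norm_rpow_mul_norm_sq [MeasurableSpace E] [BorelSpace E]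
    [SecondCountableTopology E] (μ : Measure E) [μ.HasTemperateGrowth] {r : ℝ} (hr : 0 ≤ r)
    (v : 𝓢(E, F)) : Integrable (fun x ↦ ‖x‖ ^ r * ‖v x‖ ^ 2) μ := by
  set M := SchwartzMap.seminorm ℝ 0 0 v
  have v_le (x : E) : ‖v x‖ ≤ M := v.norm_le_seminorm ℝ x
  have rpow_le (x : E) : ‖x‖ ^ r ≤ ‖x‖ ^ 0 + ‖x‖ ^ ⌈r⌉₊ := by
    rcases le_total ‖x‖ 1 with hx | hx
    · have := Real.rpow_le_one (norm_nonneg x) hx hr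
      linarith [pow_zero ‖x‖, pow_nonneg (norm_nonneg x) ⌈r⌉₊]
    · have := Real.rpow_le_rpow_of_exponent_le hx (Nat.le_ceil r)
      rw [Real.rpow_natCast] at this
      linarith [pow_nonneg (norm_nonneg x) 0]
  refine (((v.integrable_pow_mul μ 0).add (v.integrable_pow_mul μ ⌈r⌉₊)).const_mul M).mono' ?_
    (.of_forall fun x ↦ ?_)
  · exact ((continuous_norm.rpow_const fun _ ↦ .inr hr).mul
      (v.continuous.norm.pow 2)).aestronglyMeasurable
  · calc ‖‖x‖ ^ r * ‖v x‖ ^ 2‖ = ‖x‖ ^ r * (‖v x‖ * ‖v x‖) := by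
          rw [Real.norm_of_nonneg (by positivity), sq]
      _ ≤ (‖x‖ ^ 0 + ‖x‖ ^ ⌈r⌉₊) * (M * ‖v x‖) := by gcongr; exacts [rpow_le x, v_le x]
      _ = M * (‖x‖ ^ 0 * ‖v x‖ + ‖x‖ ^ ⌈r⌉₊ * ‖v x‖) := by ring

end SchwartzIntegrability

section ChangeOfVariables

variable {V F : Type*} [NormedAddCommGroup V] [SecondCountableTopology V] [MeasurableSpace V]
  [BorelSpace V] [SeminormedAddCommGroup F] {u : V → F}

lemma measurable_norm_sub_sq_div_norm_rpow (hu : Continuous u) (p : ℝ) :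
    Measurable fun z : V × V ↦ ‖u z.1 - u z.2‖ ^ 2 / ‖z.1 - z.2‖ ^ p := by
  have numerator_continuous : Continuous fun z : V × V ↦ ‖u z.1 - u z.2‖ ^ 2 := by fun_prop
  exact numerator_continuous.measurable.div (by fun_prop)

lemma lintegral_lintegral_norm_sub_sq_div (μ : Measure V) [SFinite μ] [μ.IsAddLeftInvariant]
    [μ.IsNegInvariant] (hu : Continuous u) (p : ℝ) :
    ∫⁻ x, ∫⁻ y, ENNReal.ofReal (‖u x - u y‖ ^ 2 / ‖x - y‖ ^ p) ∂μ ∂μ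
      = ∫⁻ h, ∫⁻ x, ENNReal.ofReal (‖u x - u (x - h)‖ ^ 2 / ‖h‖ ^ p) ∂μ ∂μ := by
  have measurable_shifted :
      Measurable fun z : V × V ↦ ‖u z.1 - u (z.1 - z.2)‖ ^ 2 / ‖z.2‖ ^ p := by
    have numerator_continuous : Continuous fun z : V × V ↦ ‖u z.1 - u (z.1 - z.2)‖ ^ 2 := by
      fun_prop
    exact numerator_continuous.measurable.div (by fun_prop)
  have substitute (x : V) : ∫⁻ y, ENNReal.ofReal (‖u x - u y‖ ^ 2 / ‖x - y‖ ^ p) ∂μ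
      = ∫⁻ h, ENNReal.ofReal (‖u x - u (x - h)‖ ^ 2 / ‖h‖ ^ p) ∂μ := by
    rw [← lintegral_sub_left_eq_self _ x]
    simp only [sub_sub_cancel]
  simp_rw [substitute]
  exact lintegral_lintegral_swap measurable_shifted.ennreal_ofReal.aemeasurable

end ChangeOfVariables

section Plancherel

variable {V F : Type*} [NormedAddCommGroup V] [InnerProductSpace ℝ V] [FiniteDimensional ℝ V]
  [MeasurableSpace V] [BorelSpace V] [NormedAddCommGroup F]

lemma norm_one_sub_fourierChar (t : ℝ) : ‖1 - (𝐞 (-t) : ℂ)‖ = ‖2 * sin (π * t)‖ := by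
  rw [norm_sub_rev, Real.fourierChar_apply, mul_comm, Complex.norm_exp_I_mul_ofReal_sub_one,
    show 2 * π * -t / 2 = -(π * t) by ring, Real.sin_neg, mul_neg, norm_neg]

lemma fourier_sub_compSubConst [NormedSpace ℂ F] (u : 𝓢(V, F)) (h ξ : V) :
    𝓕 (u - u.compSubConstCLM ℂ h) ξ = (1 - (𝐞 (-⟪h, ξ⟫) : ℂ)) • 𝓕 u ξ := by
  have fourier_translate : 𝓕 (u.compSubConstCLM ℂ h) ξ = 𝐞 (-⟪h, ξ⟫) • 𝓕 u ξ := by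
    have translate_eq : ⇑(u.compSubConstCLM ℂ h) = u ∘ fun x ↦ x + -h := by
      ext x
      simp only [SchwartzMap.compSubConstCLM_apply, Function.comp_apply, sub_eq_add_neg]
    rw [SchwartzMap.fourier_coe, translate_eq, ← inner_neg_left]
    exact congrFun (VectorFourier.fourierIntegral_comp_add_right 𝐞 volume (innerₗ V) u (-h)) ξ
  have fourier_sub : 𝓕 (u - u.compSubConstCLM ℂ h) = 𝓕 u - 𝓕 (u.compSubConstCLM ℂ h) :=
    map_sub (FourierTransform.fourierCLM ℂ 𝓢(V, F)) _ _
  rw [fourier_sub, sub_apply, fourier_translate, sub_smul, one_smul, Circle.smul_def]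

variable [InnerProductSpace ℂ F] [CompleteSpace F] (u : 𝓢(V, F))

lemma lintegral_norm_sq_fourier :
    ∫⁻ ξ, ENNReal.ofReal (‖𝓕 u ξ‖ ^ 2) = ∫⁻ x, ENNReal.ofReal (‖u x‖ ^ 2) := by
  have norm_sq_integrable (v : 𝓢(V, F)) : Integrable fun x ↦ ‖v x‖ ^ 2 :=
    (v.memLp 2).integrable_norm_pow two_ne_zero
  have lintegral_eq (v : 𝓢(V, F)) :
      ∫⁻ x, ENNReal.ofReal (‖v x‖ ^ 2) = ENNReal.ofReal (∫ x, ‖v x‖ ^ 2) :=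
    (ofReal_integral_eq_lintegral_ofReal (norm_sq_integrable v)
      (.of_forall fun _ ↦ by positivity)).symm
  rw [lintegral_eq, lintegral_eq, SchwartzMap.integral_norm_sq_fourier]

lemma lintegral_norm_sub_translate_sq (h : V) :
    ∫⁻ x, ENNReal.ofReal (‖u x - u (x - h)‖ ^ 2)
      = ∫⁻ ξ, ENNReal.ofReal ((2 * sin (π * ⟪h, ξ⟫)) ^ 2 * ‖𝓕 u ξ‖ ^ 2) := by
  have norm_fourier_sq (ξ : V) : ‖𝓕 (u - u.compSubConstCLM ℂ h) ξ‖ ^ 2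
      = (2 * sin (π * ⟪h, ξ⟫)) ^ 2 * ‖𝓕 u ξ‖ ^ 2 := by
    rw [fourier_sub_compSubConst, norm_smul, norm_one_sub_fourierChar, mul_pow, Real.norm_eq_abs,
      sq_abs]
  simp_rw [← norm_fourier_sq, lintegral_norm_sq_fourier, sub_apply,
    SchwartzMap.compSubConstCLM_apply]

lemma lintegral_norm_sub_translate_sq_div (h : V) {c : ℝ} (hc : 0 ≤ c) :
    ∫⁻ x, ENNReal.ofReal (‖u x - u (x - h)‖ ^ 2 / c)
      = ∫⁻ ξ, ENNReal.ofReal ((2 * sin (π * ⟪h, ξ⟫)) ^ 2 / c * ‖𝓕 u ξ‖ ^ 2) := by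
  simp_rw [div_mul_eq_mul_div, div_eq_inv_mul _ c, ENNReal.ofReal_mul (inv_nonneg.2 hc)]
  rw [lintegral_const_mul' _ _ ENNReal.ofReal_ne_top, lintegral_norm_sub_translate_sq,
    lintegral_const_mul' _ _ ENNReal.ofReal_ne_top]

lemma lintegral_gagliardo_eq_lintegral_gagliardoSymbol (s : ℝ) :
    ∫⁻ x, ∫⁻ y, ENNReal.ofReal (‖u x - u y‖ ^ 2 / ‖x - y‖ ^ (finrank ℝ V + 2 * s))
      = ∫⁻ ξ, gagliardoSymbol s ξ * ENNReal.ofReal (‖𝓕 u ξ‖ ^ 2) := by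
  have measurable_integrand : Measurable fun z : V × V ↦
      (2 * sin (π * ⟪z.1, z.2⟫)) ^ 2 / ‖z.1‖ ^ (finrank ℝ V + 2 * s) * ‖𝓕 u z.2‖ ^ 2 := by
    have fourier_continuous : Continuous fun z : V × V ↦ ‖𝓕 u z.2‖ ^ 2 := by fun_prop
    exact Measurable.mul (by fun_prop) fourier_continuous.measurable
  simp_rw [lintegral_lintegral_norm_sub_sq_div volume u.continuous,
    fun h : V ↦ lintegral_norm_sub_translate_sq_div u h
      (Real.rpow_nonneg (norm_nonneg h) (finrank ℝ V + 2 * s))]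
  rw [lintegral_lintegral_swap measurable_integrand.ennreal_ofReal.aemeasurable]
  refine lintegral_congr fun ξ ↦ ?_
  rw [gagliardoSymbol, ← lintegral_mul_const' _ _ ENNReal.ofReal_ne_top]
  exact lintegral_congr fun h ↦ ENNReal.ofReal_mul (by positivity)

lemma lintegral_gagliardo_eq_mul {s : ℝ} (hs : 0 < s) {e : V} (he : ‖e‖ = 1) :
    ∫⁻ x, ∫⁻ y, ENNReal.ofReal (‖u x - u y‖ ^ 2 / ‖x - y‖ ^ (finrank ℝ V + 2 * s))
      = gagliardoSymbol s e * ENNReal.ofReal (∫ ξ, ‖ξ‖ ^ (2 * s) * ‖𝓕 u ξ‖ ^ 2) := by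
  have rhs_integrable : Integrable fun ξ ↦ ‖ξ‖ ^ (2 * s) * ‖𝓕 u ξ‖ ^ 2 :=
    integrable_norm_rpow_mul_norm_sq volume (by positivity) (𝓕 u)
  rw [lintegral_gagliardo_eq_lintegral_gagliardoSymbol,
    ofReal_integral_eq_lintegral_ofReal rhs_integrable (.of_forall fun _ ↦ by positivity),
    ← lintegral_const_mul'' _ rhs_integrable.aemeasurable.ennreal_ofReal]
  refine lintegral_congr fun ξ ↦ ?_
  rw [gagliardoSymbol_eq_mul_norm_rpow hs.ne' he, mul_assoc, ENNReal.ofReal_mul (by positivity)]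

end Plancherel

theorem gagliardo_eq_fourier_general {V F : Type*} [NormedAddCommGroup V] [InnerProductSpace ℝ V]
    [FiniteDimensional ℝ V] [Nontrivial V] [MeasurableSpace V] [BorelSpace V]
    [NormedAddCommGroup F] [InnerProductSpace ℂ F] [CompleteSpace F]
    {s : ℝ} (hs : s ∈ Set.Ioo (0 : ℝ) 1) :
    ∃ C : ℝ, 0 < C ∧ ∀ u : 𝓢(V, F),
      ∫ x, ∫ y, ‖u x - u y‖ ^ 2 / ‖x - y‖ ^ (finrank ℝ V + 2 * s)
        = C * ∫ ξ, ‖ξ‖ ^ (2 * s) * ‖𝓕 u ξ‖ ^ 2 := by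
  obtain ⟨e, he⟩ : ∃ e : V, ‖e‖ = 1 := exists_norm_eq V zero_le_one
  have symbol_pos : 0 < gagliardoSymbol s e :=
    gagliardoSymbol_pos (norm_ne_zero_iff.1 (by simp [he]))
  have symbol_lt_top : gagliardoSymbol s e < ∞ := gagliardoSymbol_lt_top hs e
  refine ⟨(gagliardoSymbol s e).toReal, ENNReal.toReal_pos symbol_pos.ne' symbol_lt_top.ne,
    fun u ↦ ?_⟩
  have lintegral_eq := lintegral_gagliardo_eq_mul u hs.1 he
  rw [integral_integral_eq_toReal_lintegral_lintegral
      (measurable_norm_sub_sq_div_norm_rpow u.continuous _) (fun _ _ ↦ by positivity)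
      (lintegral_eq ▸ ENNReal.mul_ne_top symbol_lt_top.ne ENNReal.ofReal_ne_top),
    lintegral_eq, ENNReal.toReal_mul,
    ENNReal.toReal_ofReal (integral_nonneg fun _ ↦ by positivity)]

lemma FT_eq_fourier {d : ℕ} (u : EuclideanSpace ℝ (Fin d) → ℂ) : FT u = 𝓕 u := by
  ext ξ
  simp only [FT, Real.fourier_eq', smul_eq_mul, neg_mul]

/-- The Gagliardo seminorm equals a constant multiple of the Fourier-side
fractional Sobolev seminorm. -/
theorem gagliardo_eq_fourier (d : ℕ) (hd : 1 ≤ d) (s : ℝ) (hs : s ∈ Set.Ioo (0 : ℝ) 1) :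
    ∃ C : ℝ, 0 < C ∧
      ∀ u : SchwartzMap (EuclideanSpace ℝ (Fin d)) ℂ,
        (∫ x : EuclideanSpace ℝ (Fin d), ∫ y : EuclideanSpace ℝ (Fin d),
            ‖u x - u y‖ ^ 2 / ‖x - y‖ ^ ((d : ℝ) + 2 * s))
        = C * ∫ ξ : EuclideanSpace ℝ (Fin d), ‖ξ‖ ^ (2 * s) * ‖FT (⇑u) ξ‖ ^ 2 := by
  have : Nonempty (Fin d) := ⟨⟨0, hd⟩⟩
  simpa only [finrank_euclideanSpace_fin, FT_eq_fourier, SchwartzMap.fourier_coe] using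
    gagliardo_eq_fourier_general (V := EuclideanSpace ℝ (Fin d)) (F := ℂ) hs
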